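/- Let p be a prime with p ≡ 7 (mod 8). Then ℤ_(p) is equal to the set of rational numbers of the form 2(x₁₁ + x₁₂ + y₁₁ + y₁₂) where there exist rationals x_{ij}, y_{ij} (for i ∈ {1,2}, j ∈ {1,2,3,4}) satisfying f_{−1,−p}(x₁₁,x₁₂,x₁₃,x₁₄)² + f_{−1,−p}(x₂₁,x₂₂,x₂₃,x₂₄)² + f_{2p,p}(y₁₁,y₁₂,y₁₃,y₁₄)² + f_{2p,p}(y₂₁,y₂₂,y₂₃,y₂₄)² = 0. -/

import Mathlib

/-- The polynomial `f_{a,b}(x₁,x₂,x₃,x₄) = x₁² − a·x₂² − b·x₃² + a·b·x₄² − 1`. -/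
def fab (a b x₁ x₂ x₃ x₄ : ℚ) : ℚ :=
  x₁ ^ 2 - a * x₂ ^ 2 - b * x₃ ^ 2 + a * b * x₄ ^ 2 - 1

/-- `ℤ_(p)` : the set of rational numbers with nonnegative `p`-adic valuation,
i.e. whose denominator is not divisible by `p`, viewed as a subset of `ℚ`. -/
def Zloc (p : ℕ) : Set ℚ := {x : ℚ | ¬ (p ∣ x.den)}

/-!
The numbers `x₁ + x₂` with `f_{-1,-p}(x) = 0`, and likewise `y₁ + y₂` with `f_{2p,p}(y) = 0`,
lie in `ℤ_(p)`: both norm forms are anisotropic over `ℚ_p`, where they have the shape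
`x² + cy² ± p(z² + cw²)` with `-c` a nonresidue mod `p` (`c = 1` and `c = 2`).

Conversely let `w = z / 2` be in `ℤ_(p)`. The algebra `(-1, -p)` splits at `2`, so the numbers
`x₁ + x₂` approximate `w` `2`-adically; explicitly, `x₁ = 2 / (1 + p(a² + b²)) - 1`, `x₂ = 0`.
This reduces the problem to writing a given `t` in `ℤ_(2) ∩ ℤ_(p)` as `y₁ + y₂`, and that amounts
to representing `2pt² - (2p - 1)` by `v² + 2h² - pg²` over `ℚ`. After clearing denominators it is
enough that this form represents every odd integer `n` prime to `p`. By Dirichlet's theorem there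
is a prime `q` with `q ≡ 5 [8]`, `q ≡ -1 [p]`, `q ≡ 1 [n]`, and Legendre's theorem applies to both
`n = v² - qs²` and `q = pg² - 2h²`.
-/

/-! ### Legendre's theorem on ternary forms -/

lemma exists_ne_zero_map_eq_zero_of_card_lt {ι G : Type*} [Fintype ι] [AddGroup G] [Finite G]
    (φ : (ι → ℤ) →+ G) (X : ι → ℕ) (hX : Nat.card G < ∏ i, X i) :
    ∃ v ≠ 0, φ v = 0 ∧ ∀ i, |v i| < X i := by
  classical
  have := Fintype.ofFinite G
  let toInt (u : ∀ i, Fin (X i)) : ι → ℤ := fun i ↦ u i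
  obtain ⟨u, w, huw, h⟩ := Fintype.exists_ne_map_eq_of_card_lt (fun u ↦ φ (toInt u))
    (by simpa [Nat.card_eq_fintype_card] using hX)
  refine ⟨toInt u - toInt w, fun h0 ↦ huw ?_, by rw [map_sub, h, sub_self], fun i ↦ ?_⟩
  · ext i
    exact Int.ofNat_inj.mp (congrFun (sub_eq_zero.mp h0) i)
  · have := (u i).isLt
    have := (w i).isLt
    simp only [toInt, Pi.sub_apply, abs_lt]
    omega

lemma natCast_le_ceil_sqrt_sq (n : ℕ) : n ≤ ⌈√(n : ℝ)⌉₊ ^ 2 := by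
  exact_mod_cast (Real.sqrt_le_left (Nat.cast_nonneg _)).mp (Nat.le_ceil √(n : ℝ))

lemma sq_lt_of_abs_lt_ceil_sqrt {n : ℕ} {d : ℤ} (hd : |d| < ⌈√(n : ℝ)⌉₊) : d ^ 2 < n := by
  have h : (d.natAbs : ℝ) < √(n : ℝ) :=
    Nat.lt_ceil.mp (by rw [Int.abs_eq_natAbs] at hd; exact_mod_cast hd)
  rw [← Int.natAbs_sq]
  exact_mod_cast (Real.lt_sqrt (Nat.cast_nonneg _)).mp h

lemma natCast_dvd_mul_sq_add_mul_sq {N : ℕ} {a b x y : ℤ} {s : ZMod N} (ha : IsCoprime a N)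
    (hs : (-(a * b) : ZMod N) = s * s) (h : (a * x - s * y : ZMod N) = 0) :
    (N : ℤ) ∣ a * x ^ 2 + b * y ^ 2 := by
  refine ha.symm.dvd_of_dvd_mul_left ((ZMod.intCast_zmod_eq_zero_iff_dvd _ _).mp ?_)
  push_cast
  linear_combination (a * x + s * y : ZMod N) * h - (y : ZMod N) ^ 2 * hs

section Legendre

variable {a b c : ℕ} (ha : 0 < a) (hb : 0 < b) (hc : 0 < c)
  (hab : a.Coprime b) (hac : a.Coprime c) (hbc : b.Coprime c)
  (hsa : IsSquare (b * c : ZMod a)) (hsb : IsSquare (a * c : ZMod b))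
  (hsc : IsSquare (-(a * b) : ZMod c))

include ha hb hc in
lemma mul_mul_lt_prod_ceil_sqrt (hsq : ¬ IsSquare (b * c)) :
    a * b * c < ⌈√((b * c : ℕ) : ℝ)⌉₊ * ⌈√((a * c : ℕ) : ℝ)⌉₊ * ⌈√((a * b : ℕ) : ℝ)⌉₊ := by
  have hlt := (natCast_le_ceil_sqrt_sq (b * c)).lt_of_ne fun h ↦ hsq ⟨_, h.trans (sq _)⟩
  refine lt_of_pow_lt_pow_left₀ 2 (Nat.zero_le _) ?_
  calc (a * b * c) ^ 2 = b * c * (a * c * (a * b)) := by ring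
    _ < ⌈√((b * c : ℕ) : ℝ)⌉₊ ^ 2 * (a * c * (a * b)) :=
      Nat.mul_lt_mul_of_pos_right hlt (by positivity)
    _ ≤ ⌈√((b * c : ℕ) : ℝ)⌉₊ ^ 2 * (⌈√((a * c : ℕ) : ℝ)⌉₊ ^ 2 * ⌈√((a * b : ℕ) : ℝ)⌉₊ ^ 2) := by
      gcongr <;> exact natCast_le_ceil_sqrt_sq _
    _ = _ := by ring

include ha hb hc hab hac hbc hsa hsb hsc in
lemma exists_ne_zero_mul_mul_dvd_ternary_form (hsq : ¬ IsSquare (b * c)) :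
    ∃ x y z : ℤ, (x ≠ 0 ∨ y ≠ 0 ∨ z ≠ 0) ∧ x ^ 2 < b * c ∧ y ^ 2 < a * c ∧ z ^ 2 < a * b ∧
      (a * b * c : ℤ) ∣ a * x ^ 2 + b * y ^ 2 - c * z ^ 2 := by
  have : NeZero a := ⟨ha.ne'⟩
  have : NeZero b := ⟨hb.ne'⟩
  have : NeZero c := ⟨hc.ne'⟩
  obtain ⟨r, hr⟩ := hsa
  obtain ⟨s, hs⟩ := hsb
  obtain ⟨t, ht⟩ := hsc
  let φ : (Fin 3 → ℤ) →+ ZMod a × ZMod b × ZMod c := AddMonoidHom.mk'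
    (fun v ↦ (b * v 1 - r * v 2, a * v 0 - s * v 2, a * v 0 - t * v 1))
    (fun v w ↦ by ext <;> simp <;> ring)
  obtain ⟨v, hv, hφ, hbd⟩ := exists_ne_zero_map_eq_zero_of_card_lt φ
    ![⌈√((b * c : ℕ) : ℝ)⌉₊, ⌈√((a * c : ℕ) : ℝ)⌉₊, ⌈√((a * b : ℕ) : ℝ)⌉₊] (by
      simpa [Fin.prod_univ_three, Nat.card_prod, mul_assoc] using
        mul_mul_lt_prod_ceil_sqrt ha hb hc hsq)
  obtain ⟨hφa, hφb, hφc⟩ : (b * v 1 - r * v 2 : ZMod a) = 0 ∧ (a * v 0 - s * v 2 : ZMod b) = 0 ∧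
    (a * v 0 - t * v 1 : ZMod c) = 0 := by simpa [φ] using hφ
  have hab' := Nat.isCoprime_iff_coprime.mpr hab
  have hac' := Nat.isCoprime_iff_coprime.mpr hac
  have hbc' := Nat.isCoprime_iff_coprime.mpr hbc
  refine ⟨v 0, v 1, v 2, ?_, ?_, ?_, ?_,
    (hac'.mul_left hbc').mul_dvd (hab'.mul_dvd ?_ ?_) ?_⟩
  · by_contra! h
    exact hv (by ext i; fin_cases i <;> simp [h])
  · exact_mod_cast sq_lt_of_abs_lt_ceil_sqrt (hbd 0)
  · exact_mod_cast sq_lt_of_abs_lt_ceil_sqrt (hbd 1)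
  · exact_mod_cast sq_lt_of_abs_lt_ceil_sqrt (hbd 2)
  · have := natCast_dvd_mul_sq_add_mul_sq (b := -c) hab'.symm (by simpa using hr)
      (by simpa using hφa)
    convert (dvd_mul_right (a : ℤ) (v 0 ^ 2)).add this using 1
    ring
  · have := natCast_dvd_mul_sq_add_mul_sq (b := -c) hab' (by simpa using hs) (by simpa using hφb)
    convert (dvd_mul_right (b : ℤ) (v 1 ^ 2)).add this using 1
    ring
  · have := natCast_dvd_mul_sq_add_mul_sq (b := b) hac' (by simpa using ht) (by simpa using hφc)
    exact this.sub (dvd_mul_right _ _)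

include ha hb hc hab hac hbc hsa hsb hsc in
theorem exists_mul_sq_add_mul_sq_eq_mul_sq :
    ∃ x y z : ℤ, (x ≠ 0 ∨ y ≠ 0 ∨ z ≠ 0) ∧ a * x ^ 2 + b * y ^ 2 = c * z ^ 2 := by
  by_cases hsq : IsSquare (b * c)
  · obtain ⟨d, hd⟩ := hsq
    refine ⟨0, c, d, by simp [hc.ne'], ?_⟩
    have : (b * c : ℤ) = d * d := by exact_mod_cast hd
    linear_combination (c : ℤ) * this
  obtain ⟨x, y, z, hne, hx, hy, hz, k, hk⟩ :=
    exists_ne_zero_mul_mul_dvd_ternary_form ha hb hc hab hac hbc hsa hsb hsc hsq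
  have habc : (0 : ℤ) < a * b * c := by positivity
  have hk_lt : k < 2 := by
    by_contra! h
    nlinarith [mul_le_mul_of_nonneg_left h habc.le, sq_nonneg z]
  have lt_hk : -1 < k := by
    by_contra! h
    nlinarith [mul_le_mul_of_nonneg_left h habc.le, sq_nonneg x, sq_nonneg y]
  obtain rfl | rfl : k = 0 ∨ k = 1 := by omega
  · exact ⟨x, y, z, hne, by linarith⟩
  · -- Here `c * (z ^ 2 + a * b) = a * x ^ 2 + b * y ^ 2`. Multiply by `z ^ 2 + a * b`, a value
    -- of the form `X ^ 2 + a * b * Y ^ 2`, which composes with `a * X ^ 2 + b * Y ^ 2`.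
    refine ⟨x * z + b * y, y * z - a * x, z ^ 2 + a * b, .inr (.inr (by positivity)), ?_⟩
    linear_combination (z ^ 2 + a * b) * hk

end Legendre

/-! ### The numbers represented by `u² + 2v² - pw²` -/

lemma exists_eq_sq_sub_mul_sq {n : ℤ} {q : ℕ} (hq : q.Prime) (hn : n ≠ 0)
    (hnq : n.natAbs.Coprime q) (hqn : IsSquare (q : ZMod n.natAbs)) (hsn : IsSquare (n : ZMod q)) :
    ∃ u v : ℚ, (n : ℚ) = u ^ 2 - q * v ^ 2 := by
  have hn_pos := Int.natAbs_pos.mpr hn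
  obtain ⟨x, y, z, hne, h⟩ : ∃ x y z : ℤ, (x ≠ 0 ∨ y ≠ 0 ∨ z ≠ 0) ∧
      n * x ^ 2 + q * y ^ 2 = z ^ 2 := by
    rcases hn.lt_or_gt with hneg | hpos
    · have habs : (n.natAbs : ℤ) = -n := by omega
      obtain ⟨z, x, y, hne, h⟩ := exists_mul_sq_add_mul_sq_eq_mul_sq one_pos hn_pos hq.pos
        (Nat.coprime_one_left _) (Nat.coprime_one_left _) hnq ⟨0, Subsingleton.elim _ _⟩
        (by simpa using hqn) (by simpa [← Int.cast_natCast (R := ZMod q) n.natAbs, habs] using hsn)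
      exact ⟨x, y, z, by tauto, by rw [habs] at h; linear_combination -h⟩
    · have habs : (n.natAbs : ℤ) = n := by omega
      obtain ⟨x, y, z, hne, h⟩ := exists_mul_sq_add_mul_sq_eq_mul_sq hn_pos hq.pos one_pos
        hnq (Nat.coprime_one_right _) (Nat.coprime_one_right _) (by simpa using hqn)
        (by simpa [← Int.cast_natCast (R := ZMod q) n.natAbs, habs] using hsn)
        ⟨0, Subsingleton.elim _ _⟩
      exact ⟨x, y, z, hne, by rw [habs] at h; linear_combination h⟩
  have hx : x ≠ 0 := by
    rintro rfl
    have hy : y ≠ 0 := by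
      rintro rfl
      have hz : z = 0 := by simpa using h.symm
      simp [hz] at hne
    refine hq.prime.irreducible.not_isSquare (Rat.isSquare_natCast_iff.mp ⟨z / y, ?_⟩)
    have : (y : ℚ) ≠ 0 := by exact_mod_cast hy
    field_simp
    exact_mod_cast (by linear_combination h : q * y ^ 2 = z ^ 2)
  have hx' : (x : ℚ) ≠ 0 := by exact_mod_cast hx
  refine ⟨z / x, y / x, ?_⟩
  field_simp
  exact_mod_cast (by linear_combination h : n * x ^ 2 = z ^ 2 - q * y ^ 2)

lemma exists_eq_mul_sq_sub_two_mul_sq {p q : ℕ} (hp : p.Prime) (hp2 : p ≠ 2) (hq : q.Prime)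
    (hq2 : q ≠ 2) (hpq : p ≠ q) (hsq : IsSquare (2 * p : ZMod q))
    (hsp : IsSquare (-(2 * q) : ZMod p)) :
    ∃ u v : ℚ, (q : ℚ) = p * u ^ 2 - 2 * v ^ 2 := by
  obtain ⟨x, y, z, hne, h⟩ := exists_mul_sq_add_mul_sq_eq_mul_sq hq.pos two_pos hp.pos
    ((Nat.coprime_primes hq Nat.prime_two).mpr hq2) ((Nat.coprime_primes hq hp).mpr hpq.symm)
    ((Nat.coprime_primes Nat.prime_two hp).mpr hp2.symm) (by exact_mod_cast hsq)
    (by generalize (q * p : ZMod 2) = r; revert r; decide)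
    (by simpa [mul_comm] using hsp)
  push_cast at h
  have hx : x ≠ 0 := by
    rintro rfl
    have hz : z ≠ 0 := by
      rintro rfl
      have hy : y = 0 := by simpa using h
      simp [hy] at hne
    have hz' : (z : ℚ) ≠ 0 := by exact_mod_cast hz
    obtain ⟨r, hr⟩ : IsSquare (2 * p) := by
      refine Rat.isSquare_natCast_iff.mp ⟨2 * y / z, ?_⟩
      push_cast
      field_simp
      have hℚ := congrArg (Int.cast : ℤ → ℚ) h
      push_cast at hℚ
      linear_combination -hℚ
    obtain ⟨k, rfl⟩ : Even r := by simpa only [hr, Nat.even_mul, or_self] using even_two_mul p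
    exact Nat.not_even_iff_odd.mpr (hp.odd_of_ne_two hp2) ⟨k * k, by linarith⟩
  have hx' : (x : ℚ) ≠ 0 := by exact_mod_cast hx
  refine ⟨z / x, y / x, ?_⟩
  field_simp
  exact_mod_cast (by linear_combination h : q * x ^ 2 = p * z ^ 2 - 2 * y ^ 2)

lemma exists_prime_mod_eight_eq_five {p N : ℕ} (hp : Odd p) (hN : Odd N) (hpN : p.Coprime N) :
    ∃ q : ℕ, q.Prime ∧ q % 8 = 5 ∧ (q : ZMod p) = -1 ∧ (q : ZMod N) = 1 := by
  have : NeZero p := ⟨hp.pos.ne'⟩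
  have : NeZero N := ⟨hN.pos.ne'⟩
  have h8 : Nat.Coprime 8 (p * N) := Nat.Coprime.pow_left 3 (Nat.coprime_two_left.mpr (hp.mul hN))
  let e : ZMod (8 * (p * N)) ≃+* ZMod 8 × ZMod p × ZMod N :=
    (ZMod.chineseRemainder h8).trans (.prodCongr (.refl _) (ZMod.chineseRemainder hpN))
  have hunit : IsUnit ((5, -1, 1) : ZMod 8 × ZMod p × ZMod N) :=
    Prod.isUnit_iff.mpr ⟨(by decide : IsUnit (5 : ZMod 8)),
      Prod.isUnit_iff.mpr ⟨isUnit_one.neg, isUnit_one⟩⟩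
  obtain ⟨q, -, hq, hqe⟩ := Nat.forall_exists_prime_gt_and_eq_mod (hunit.map e.symm) 0
  have heq : ((q, q, q) : ZMod 8 × ZMod p × ZMod N) = (5, -1, 1) := by
    rw [← e.apply_symm_apply (5, -1, 1), ← hqe, map_natCast]
    rfl
  obtain ⟨h5, hp1, hN1⟩ := by simpa only [Prod.mk.injEq] using heq
  exact ⟨q, hq, (ZMod.natCast_eq_natCast_iff q 5 8).mp h5, hp1, hN1⟩

lemma jacobiSym_eq_one_of_natCast_eq_one {n : ℤ} {q : ℕ} (hn : Odd n) (hq : q % 4 = 1)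
    (hqn : (q : ZMod n.natAbs) = 1) : jacobiSym n q = 1 := by
  have hq_odd : Odd q := Nat.odd_iff.mpr (by omega)
  have habs : jacobiSym n.natAbs q = 1 := by
    rw [← jacobiSym.quadratic_reciprocity_one_mod_four hq (Int.natAbs_odd.mpr hn),
      ← jacobiSym.one_left n.natAbs]
    refine jacobiSym.mod_left' ((ZMod.intCast_eq_intCast_iff _ _ _).mp ?_)
    simpa using hqn
  rcases Int.natAbs_eq n with h | h
  · rwa [h]
  · rw [h, jacobiSym.neg _ hq_odd, habs, ZMod.χ₄_nat_one_mod_four hq, one_mul]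

lemma isSquare_two_mul_of_natCast_eq_neg_one {p q : ℕ} [Fact q.Prime] (hp : p % 4 = 3)
    (hq : q % 8 = 5) (hqp : (q : ZMod p) = -1) : IsSquare (2 * p : ZMod q) := by
  have hp_odd : Odd p := Nat.odd_iff.mpr (by omega)
  have hq_odd : Odd q := Nat.odd_iff.mpr (by omega)
  have h2 : jacobiSym 2 q = -1 := by
    rw [jacobiSym.at_two hq_odd, ZMod.χ₈_nat_eq_if_mod_eight]
    simp [hq, show q % 2 ≠ 0 by omega]
  have hpq : jacobiSym p q = -1 := by
    rw [← jacobiSym.quadratic_reciprocity_one_mod_four (by omega) hp_odd,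
      ← ZMod.χ₄_nat_three_mod_four hp, ← jacobiSym.at_neg_one hp_odd]
    refine jacobiSym.mod_left' ((ZMod.intCast_eq_intCast_iff _ _ _).mp ?_)
    simpa using hqp
  have := ZMod.isSquare_of_jacobiSym_eq_one (a := 2 * p) (p := q)
    (by rw [jacobiSym.mul_left, h2, hpq]; rfl)
  exact_mod_cast this

theorem exists_eq_sq_add_two_mul_sq_sub_mul_sq {p : ℕ} (hp : p.Prime) (hmod : p % 8 = 7) {n : ℤ}
    (hn : Odd n) (hpn : ¬ (p : ℤ) ∣ n) :
    ∃ u v w : ℚ, (n : ℚ) = u ^ 2 + 2 * v ^ 2 - p * w ^ 2 := by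
  have := Fact.mk hp
  have hpN : p.Coprime n.natAbs := hp.coprime_iff_not_dvd.mpr (by rwa [← Int.natCast_dvd])
  obtain ⟨q, hq, hq8, hqp, hqn⟩ := exists_prime_mod_eight_eq_five (p := p)
    (Nat.odd_iff.mpr (by omega)) (Int.natAbs_odd.mpr hn) hpN
  have := Fact.mk hq
  have hnq : n.natAbs.Coprime q := by
    rw [Nat.coprime_comm, ← ZMod.isUnit_iff_coprime, hqn]
    exact isUnit_one
  have hpq : p ≠ q := by
    rintro rfl
    omega
  obtain ⟨u, y, hu⟩ := exists_eq_sq_sub_mul_sq hq (by rintro rfl; simp at hn) hnq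
    (by rw [hqn]; exact .one)
    (ZMod.isSquare_of_jacobiSym_eq_one (jacobiSym_eq_one_of_natCast_eq_one hn (by omega) hqn))
  obtain ⟨w, v, hv⟩ := exists_eq_mul_sq_sub_two_mul_sq hp (by omega) hq (by omega) hpq
    (isSquare_two_mul_of_natCast_eq_neg_one (by omega) hq8 hqp) (by
      rw [hqp, mul_neg_one, neg_neg, ZMod.exists_sq_eq_two_iff (by omega)]
      exact .inr hmod)
  exact ⟨u, v * y, w * y, by rw [hu, hv]; ring⟩

/-! ### Integrality at `p` -/

/-- The sums of the first two coordinates of the zeros of `f_{a,b}`, that is, of the elements of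
reduced norm one in the quaternion algebra `(a, b)` over `ℚ`. -/
def coordSums (a b : ℚ) : Set ℚ :=
  {t | ∃ x₁ x₂ x₃ x₄, fab a b x₁ x₂ x₃ x₄ = 0 ∧ t = x₁ + x₂}

section Padic

variable {p : ℕ} [Fact p.Prime]

lemma norm_sq_add_natCast_eq_one {c : ℕ} (hc : ¬ IsSquare (-c : ZMod p)) {t : ℚ_[p]}
    (ht : ‖t‖ ≤ 1) : ‖t ^ 2 + c‖ = 1 := by
  obtain ⟨t, rfl⟩ : ∃ s : ℤ_[p], s = t := ⟨⟨t, ht⟩, rfl⟩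
  have hunit : IsUnit (t ^ 2 + c) := by
    by_contra h
    rw [← mem_nonunits_iff, ← IsLocalRing.mem_maximalIdeal, ← PadicInt.ker_toZMod,
      RingHom.mem_ker, map_add, map_pow, map_natCast] at h
    exact hc ⟨PadicInt.toZMod t, by linear_combination -h⟩
  exact_mod_cast PadicInt.isUnit_iff.mp hunit

lemma norm_sq_add_natCast_mul_sq {c : ℕ} (hc : ¬ IsSquare (-c : ZMod p)) (x y : ℚ_[p]) :
    ‖x ^ 2 + c * y ^ 2‖ = max ‖x‖ ‖y‖ ^ 2 := by
  rcases le_or_gt ‖x‖ ‖y‖ with h | h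
  · rw [max_eq_right h]
    rcases eq_or_ne y 0 with rfl | hy
    · obtain rfl : x = 0 := by simpa using h
      simp
    · have hxy : ‖x / y‖ ≤ 1 := by
        rw [norm_div]
        exact div_le_one_of_le₀ h (norm_nonneg y)
      rw [show x ^ 2 + c * y ^ 2 = ((x / y) ^ 2 + c) * y ^ 2 by field_simp, norm_mul, norm_pow,
        norm_sq_add_natCast_eq_one hc hxy, one_mul]
  · have hlt : ‖(c : ℚ_[p]) * y ^ 2‖ < ‖x ^ 2‖ := by
      rw [norm_mul, norm_pow, norm_pow]
      calc ‖(c : ℚ_[p])‖ * ‖y‖ ^ 2 ≤ 1 * ‖y‖ ^ 2 := by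
            gcongr
            exact IsUltrametricDist.norm_natCast_le_one ℚ_[p] c
        _ < ‖x‖ ^ 2 := by
            rw [one_mul]
            gcongr
    rw [Padic.add_eq_max_of_ne hlt.ne', max_eq_left hlt.le, max_eq_left h.le, norm_pow]

lemma norm_sq_ne_norm_prime_mul_norm_sq {x y : ℚ_[p]} (hx : x ≠ 0) (hy : y ≠ 0) :
    ‖x‖ ^ 2 ≠ ‖(p : ℚ_[p])‖ * ‖y‖ ^ 2 := by
  intro h
  have hp : (1 : ℝ) < p := mod_cast (Fact.out : p.Prime).one_lt
  rw [Padic.norm_p, Padic.norm_eq_zpow_neg_valuation hx, Padic.norm_eq_zpow_neg_valuation hy,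
    ← zpow_natCast, ← zpow_natCast, ← zpow_mul, ← zpow_mul, ← zpow_neg_one,
    ← zpow_add₀ (by positivity), zpow_right_inj₀ (by positivity) hp.ne'] at h
  push_cast at h
  omega

lemma norm_add_eq_max_of_norm_eq_sq {x y s t : ℚ_[p]} (hx : ‖x‖ = ‖s‖ ^ 2)
    (hy : ‖y‖ = ‖(p : ℚ_[p])‖ * ‖t‖ ^ 2) : ‖x + y‖ = max ‖x‖ ‖y‖ := by
  rcases eq_or_ne s 0 with rfl | hs
  · obtain rfl : x = 0 := by simpa using hx
    simp
  rcases eq_or_ne t 0 with rfl | ht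
  · obtain rfl : y = 0 := by simpa using hy
    simp
  refine Padic.add_eq_max_of_ne ?_
  rw [hx, hy]
  exact norm_sq_ne_norm_prime_mul_norm_sq hs ht

lemma norm_le_one_of_norm_prime_mul_sq_le_one {x : ℚ_[p]} (h : ‖(p : ℚ_[p])‖ * ‖x‖ ^ 2 ≤ 1) :
    ‖x‖ ≤ 1 := by
  have hp : (1 : ℝ) < p := mod_cast (Fact.out : p.Prime).one_lt
  rw [Padic.norm_p, inv_mul_le_iff₀ (by positivity)] at h
  have hlt : ‖x‖ < (p : ℝ) ^ (0 + 1 : ℤ) := by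
    rw [zero_add, zpow_one]
    nlinarith
  simpa using (Padic.norm_le_pow_iff_norm_lt_pow_add_one x 0).mpr hlt

lemma norm_le_one_of_norm_quaternary_le_one {c : ℕ} (hc : ¬ IsSquare (-c : ZMod p)) {ϖ : ℚ_[p]}
    (hϖ : ‖ϖ‖ = ‖(p : ℚ_[p])‖) {x y z w : ℚ_[p]}
    (h : ‖x ^ 2 + c * y ^ 2 + ϖ * (z ^ 2 + c * w ^ 2)‖ ≤ 1) :
    (‖x‖ ≤ 1 ∧ ‖y‖ ≤ 1) ∧ ‖z‖ ≤ 1 ∧ ‖w‖ ≤ 1 := by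
  obtain ⟨s, hs⟩ : ∃ s, max ‖x‖ ‖y‖ = ‖s‖ := (max_choice ‖x‖ ‖y‖).elim (⟨x, ·⟩) (⟨y, ·⟩)
  obtain ⟨t, ht⟩ : ∃ t, max ‖z‖ ‖w‖ = ‖t‖ := (max_choice ‖z‖ ‖w‖).elim (⟨z, ·⟩) (⟨w, ·⟩)
  have hxy : ‖x ^ 2 + c * y ^ 2‖ = ‖s‖ ^ 2 := by rw [norm_sq_add_natCast_mul_sq hc, hs]
  have hzw : ‖ϖ * (z ^ 2 + c * w ^ 2)‖ = ‖(p : ℚ_[p])‖ * ‖t‖ ^ 2 := by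
    rw [norm_mul, hϖ, norm_sq_add_natCast_mul_sq hc, ht]
  rw [norm_add_eq_max_of_norm_eq_sq hxy hzw, hxy, hzw, max_le_iff] at h
  rw [← max_le_iff, ← max_le_iff, hs, ht]
  exact ⟨(sq_le_one_iff₀ (norm_nonneg s)).mp h.1, norm_le_one_of_norm_prime_mul_sq_le_one h.2⟩

lemma mem_Zloc_iff_norm_le_one {x : ℚ} : x ∈ Zloc p ↔ ‖(x : ℚ_[p])‖ ≤ 1 := by
  refine ⟨Padic.norm_rat_le_one, fun h ↦ ?_⟩
  have := PadicInt.isUnit_iff.mp (PadicInt.isUnit_den x h)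
  rwa [PadicInt.norm_natCast_eq_one_iff, Nat.Prime.coprime_iff_not_dvd Fact.out] at this

lemma add_mem_Zloc {x y : ℚ} (hx : x ∈ Zloc p) (hy : y ∈ Zloc p) : x + y ∈ Zloc p := by
  rw [mem_Zloc_iff_norm_le_one] at *
  push_cast
  exact (PadicInt.subring p).add_mem hx hy

lemma sub_mem_Zloc {x y : ℚ} (hx : x ∈ Zloc p) (hy : y ∈ Zloc p) : x - y ∈ Zloc p := by
  rw [mem_Zloc_iff_norm_le_one] at *
  push_cast
  exact (PadicInt.subring p).sub_mem hx hy

lemma two_mul_mem_Zloc_iff (hp : p ≠ 2) {x : ℚ} : 2 * x ∈ Zloc p ↔ x ∈ Zloc p := by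
  have h2 : ‖(2 : ℚ_[p])‖ = 1 := by
    exact_mod_cast Padic.norm_natCast_eq_one_iff.mpr
      ((Nat.coprime_primes Fact.out Nat.prime_two).mpr hp)
  simp [mem_Zloc_iff_norm_le_one, h2]

lemma coordSums_neg_one_neg_subset_Zloc (hp : p % 4 = 3) : coordSums (-1) (-p) ⊆ Zloc p := by
  rintro _ ⟨x₁, x₂, x₃, x₄, hx, rfl⟩
  have hc : ¬ IsSquare (-(1 : ℕ) : ZMod p) := by
    rw [Nat.cast_one, ZMod.exists_sq_eq_neg_one_iff]
    simp [hp]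
  have hx' : (x₁ ^ 2 + (1 : ℕ) * x₂ ^ 2 + p * (x₃ ^ 2 + (1 : ℕ) * x₄ ^ 2) : ℚ_[p]) = 1 := by
    rw [fab] at hx
    rw [← Rat.cast_one, ← sub_eq_zero.mp hx]
    push_cast
    ring
  obtain ⟨⟨h₁, h₂⟩, -⟩ := norm_le_one_of_norm_quaternary_le_one (ϖ := p) hc rfl
    (by rw [hx', norm_one])
  exact add_mem_Zloc (mem_Zloc_iff_norm_le_one.mpr h₁) (mem_Zloc_iff_norm_le_one.mpr h₂)

lemma coordSums_two_mul_self_subset_Zloc (hp : p % 8 = 7) : coordSums (2 * p) p ⊆ Zloc p := by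
  rintro _ ⟨y₁, y₂, y₃, y₄, hy, rfl⟩
  have hc : ¬ IsSquare (-(2 : ℕ) : ZMod p) := by
    rw [Nat.cast_two, ZMod.exists_sq_eq_neg_two_iff (by omega)]
    omega
  have hy' : (y₁ ^ 2 + (2 : ℕ) * (p * y₄) ^ 2 + -p * (y₃ ^ 2 + (2 : ℕ) * y₂ ^ 2) : ℚ_[p]) = 1 := by
    rw [fab] at hy
    rw [← Rat.cast_one, ← sub_eq_zero.mp hy]
    push_cast
    ring
  obtain ⟨⟨h₁, -⟩, -, h₂⟩ := norm_le_one_of_norm_quaternary_le_one (ϖ := -p) hc (norm_neg _)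
    (by rw [hy', norm_one])
  exact add_mem_Zloc (mem_Zloc_iff_norm_le_one.mpr h₁) (mem_Zloc_iff_norm_le_one.mpr h₂)

end Padic

/-! ### Approximation at `2` -/

open Polynomial in
lemma exists_sq_add_self_eq {R : Type*} [CommRing R] {I : Ideal R} [HenselianRing R I] {e : R}
    (he : e ∈ I) : ∃ t, t ^ 2 + t = e := by
  obtain ⟨t, ht, -⟩ := HenselianRing.is_henselian (I := I) (X ^ 2 + X - C e : R[X]) (by monicity!)
    0 (by simpa using he) (by simp)
  exact ⟨t, by simpa [sub_eq_zero] using ht⟩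

lemma exists_sq_add_sq_eq_one_add_four_mul (d : ℤ_[2]) :
    ∃ r s : ℤ_[2], r ^ 2 + s ^ 2 = 1 + 4 * d := by
  have hd : d - d ^ 2 ∈ IsLocalRing.maximalIdeal ℤ_[2] := by
    rw [← PadicInt.ker_toZMod, RingHom.mem_ker, map_sub, map_pow]
    generalize PadicInt.toZMod d = c
    revert c
    decide
  obtain ⟨t, ht⟩ := exists_sq_add_self_eq hd
  exact ⟨1 + 2 * t, 2 * d, by linear_combination 4 * ht⟩

lemma exists_one_add_mul_sq_add_sq_eq_four_mul {p : ℕ} (hp : p % 4 = 3) (e : ℤ_[2]) :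
    ∃ r s : ℤ_[2], 1 + p * (r ^ 2 + s ^ 2) = 4 * e := by
  have hunit : IsUnit (p : ℤ_[2]) := PadicInt.isUnit_iff.mpr
    (PadicInt.norm_natCast_eq_one_iff.mpr (Nat.coprime_two_left.mpr (Nat.odd_iff.mpr (by omega))))
  obtain ⟨v, hv⟩ := hunit.exists_left_inv
  obtain ⟨r, s, hrs⟩ := exists_sq_add_sq_eq_one_add_four_mul (v * (e - (p / 4 : ℕ) - 1))
  have hp4 : (p : ℤ_[2]) = 4 * (p / 4 : ℕ) + 3 := by exact_mod_cast (by omega : p = 4 * (p / 4) + 3)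
  refine ⟨r, s, ?_⟩
  rw [hrs]
  linear_combination 4 * (e - (p / 4 : ℕ) - 1) * hv + hp4

lemma exists_norm_sub_two_div_le_one {p : ℕ} (hp : p % 4 = 3) (w : ℚ_[2]) :
    ∃ r s : ℤ_[2], (1 + p * (r ^ 2 + s ^ 2) : ℚ_[2]) ≠ 0 ∧
      ‖w - 2 / (1 + p * (r ^ 2 + s ^ 2))‖ ≤ 1 := by
  by_cases hw : ‖w‖ ≤ 1
  · refine ⟨0, 0, by simp, ?_⟩
    have h2 : ‖(2 : ℚ_[2])‖ ≤ 1 := by exact_mod_cast PadicInt.norm_le_one (2 : ℤ_[2])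
    simpa using (PadicInt.subring 2).sub_mem hw h2
  · have hw2 : 2 ≤ ‖w‖ := by
      simpa [hw] using (Padic.norm_le_pow_iff_norm_lt_pow_add_one w 0).not
    have hw0 : w ≠ 0 := norm_pos_iff.mp (by linarith)
    have he : ‖(2 * w)⁻¹‖ ≤ 1 := by
      have h2 : ‖(2 : ℚ_[2])‖ = 2⁻¹ := by exact_mod_cast Padic.norm_p (p := 2)
      rw [norm_inv, norm_mul, h2]
      exact inv_le_one_of_one_le₀ (by linarith)
    obtain ⟨r, s, hrs⟩ := exists_one_add_mul_sq_add_sq_eq_four_mul hp ⟨_, he⟩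
    have hrs' : (1 + p * (r ^ 2 + s ^ 2) : ℚ_[2]) = 4 * (2 * w)⁻¹ := by
      exact_mod_cast congrArg Subtype.val hrs
    refine ⟨r, s, by simp [hrs', hw0], ?_⟩
    have hw' : 2 / (4 * (2 * w)⁻¹) = w := by
      field_simp
      norm_num
    rw [hrs', hw', sub_self, norm_zero]
    exact zero_le_one

lemma exists_int_norm_sub_two_div_le_one {p : ℕ} (hp : p % 4 = 3) (w : ℚ_[2]) :
    ∃ a b : ℤ, ‖w - 2 / (1 + p * (a ^ 2 + b ^ 2))‖ ≤ 1 := by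
  obtain ⟨r, s, hne, hle⟩ := exists_norm_sub_two_div_le_one hp w
  let f (x : ℤ_[2] × ℤ_[2]) : ℚ_[2] := w - 2 / (1 + p * (x.1 ^ 2 + x.2 ^ 2))
  have hf : ContinuousAt f (r, s) :=
    continuousAt_const.sub (ContinuousAt.div₀ continuousAt_const
      (g := fun x : ℤ_[2] × ℤ_[2] ↦ (1 + p * (x.1 ^ 2 + x.2 ^ 2) : ℚ_[2])) (by fun_prop) hne)
  have hball : f ⁻¹' Metric.closedBall 0 1 ∈ nhds (r, s) := hf.preimage_mem_nhds <|
    (IsUltrametricDist.isOpen_closedBall 0 one_ne_zero).mem_nhds (mem_closedBall_zero_iff.mpr hle)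
  obtain ⟨_, hx, ⟨a, b⟩, rfl⟩ := mem_closure_iff_nhds.mp
    ((PadicInt.denseRange_intCast (p := 2)).prodMap PadicInt.denseRange_intCast (r, s)) _ hball
  exact ⟨a, b, by simpa [f] using hx⟩

lemma two_div_sub_one_mem_coordSums {p a b : ℚ} (h : 1 + p * (a ^ 2 + b ^ 2) ≠ 0) :
    2 / (1 + p * (a ^ 2 + b ^ 2)) - 1 ∈ coordSums (-1) (-p) := by
  refine ⟨2 / (1 + p * (a ^ 2 + b ^ 2)) - 1, 0, 2 * a / (1 + p * (a ^ 2 + b ^ 2)),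
    2 * b / (1 + p * (a ^ 2 + b ^ 2)), ?_, (add_zero _).symm⟩
  rw [fab]
  field_simp
  ring

lemma exists_mem_coordSums_sub_mem_Zloc_two {p : ℕ} (hp : p % 4 = 3) (w : ℚ) :
    ∃ u ∈ coordSums (-1) (-p), w - u ∈ Zloc 2 := by
  obtain ⟨a, b, hab⟩ := exists_int_norm_sub_two_div_le_one hp ((w + 1 : ℚ) : ℚ_[2])
  refine ⟨_, two_div_sub_one_mem_coordSums (a := a) (b := b) (by positivity), ?_⟩
  rw [mem_Zloc_iff_norm_le_one]
  convert hab using 2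
  push_cast
  ring

/-! ### Representing `ℤ_(2) ∩ ℤ_(p)` -/

lemma mem_coordSums_two_mul_self {p t v g h : ℚ} (hp : p ≠ 0) (hQ : 2 * p - 1 ≠ 0)
    (H : 2 * p * t ^ 2 - (2 * p - 1) = v ^ 2 + 2 * h ^ 2 - p * g ^ 2) :
    t ∈ coordSums (2 * p) p := by
  -- With `r ^ 2 = 2 * p`, these are `y₁ + y₂ r = (v + t r) / (1 + r)` and
  -- `y₃ + y₄ r = (g + (h / p) r) / (1 + r)`, where `1 + r` has norm `1 - 2 * p`.
  refine ⟨(2 * p * t - v) / (2 * p - 1), (v - t) / (2 * p - 1), (2 * h - g) / (2 * p - 1),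
    (g - h / p) / (2 * p - 1), ?_, ?_⟩
  · rw [fab]
    field_simp
    linear_combination (2 * p - 1) * H
  · field_simp
    ring

lemma Zloc_two_inter_Zloc_subset_coordSums {p : ℕ} (hp : p.Prime) (hmod : p % 8 = 7) :
    Zloc 2 ∩ Zloc p ⊆ coordSums (2 * p) p := by
  rintro t ⟨h2, ht⟩
  have hn : Odd (2 * p * t.num ^ 2 - (2 * p - 1) * t.den ^ 2 : ℤ) := by
    have hE : Odd (t.den : ℤ) := by
      rwa [Int.odd_coe_nat, ← Nat.not_even_iff_odd, even_iff_two_dvd]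
    have hQ : Odd (2 * p - 1 : ℤ) := ⟨p - 1, by ring⟩
    rw [mul_assoc]
    exact (even_two_mul _).sub_odd (hQ.mul hE.pow)
  have hpn : ¬ (p : ℤ) ∣ 2 * p * t.num ^ 2 - (2 * p - 1) * t.den ^ 2 := by
    rw [show (2 * p * t.num ^ 2 - (2 * p - 1) * t.den ^ 2 : ℤ) =
      t.den ^ 2 + p * (2 * t.num ^ 2 - 2 * t.den ^ 2) by ring, dvd_add_left (dvd_mul_right _ _)]
    exact fun hE ↦ ht (by exact_mod_cast (Nat.prime_iff_prime_int.mp hp).dvd_of_dvd_pow hE)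
  obtain ⟨u, v, w, h⟩ := exists_eq_sq_add_two_mul_sq_sub_mul_sq hp hmod hn hpn
  have hp0 : (p : ℚ) ≠ 0 := by exact_mod_cast hp.ne_zero
  have hQ : (2 * p - 1 : ℚ) ≠ 0 := by exact_mod_cast (by omega : (2 * p - 1 : ℤ) ≠ 0)
  have hE : (t.den : ℚ) ≠ 0 := by exact_mod_cast t.den_ne_zero
  refine mem_coordSums_two_mul_self (v := u / t.den) (h := v / t.den) (g := w / t.den) hp0 hQ ?_
  conv_lhs => rw [← t.num_div_den]
  push_cast at h
  field_simp
  linear_combination h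

/-- For a prime `p ≡ 7 (mod 8)`, `ℤ_(p)` equals the set of
rationals of the form `2(x₁₁ + x₁₂ + y₁₁ + y₁₂)` where
`f₍₋₁,₋p₎(x₁ⱼ)² + f₍₋₁,₋p₎(x₂ⱼ)² + f₍₂p,p₎(y₁ⱼ)² + f₍₂p,p₎(y₂ⱼ)² = 0`. -/
theorem stmt17 (p : ℕ) (hp : p.Prime) (hmod : p % 8 = 7) :
    Zloc p =
      {z : ℚ | ∃ x₁₁ x₁₂ x₁₃ x₁₄ x₂₁ x₂₂ x₂₃ x₂₄
          y₁₁ y₁₂ y₁₃ y₁₄ y₂₁ y₂₂ y₂₃ y₂₄ : ℚ,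
        z = 2 * (x₁₁ + x₁₂ + y₁₁ + y₁₂) ∧
        fab (-1) (-(p : ℚ)) x₁₁ x₁₂ x₁₃ x₁₄ ^ 2 +
          fab (-1) (-(p : ℚ)) x₂₁ x₂₂ x₂₃ x₂₄ ^ 2 +
          fab (2 * (p : ℚ)) (p : ℚ) y₁₁ y₁₂ y₁₃ y₁₄ ^ 2 +
          fab (2 * (p : ℚ)) (p : ℚ) y₂₁ y₂₂ y₂₃ y₂₄ ^ 2 = 0} := by
  have := Fact.mk hp
  have hu := coordSums_neg_one_neg_subset_Zloc (p := p) (by omega)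
  have ht := coordSums_two_mul_self_subset_Zloc hmod
  refine Set.Subset.antisymm (fun z hz ↦ ?_) ?_
  · have hz2 : z / 2 ∈ Zloc p := by
      rwa [← two_mul_mem_Zloc_iff (by omega), mul_div_cancel₀ z two_ne_zero]
    obtain ⟨u, hu_mem, hzu⟩ := exists_mem_coordSums_sub_mem_Zloc_two (p := p) (by omega) (z / 2)
    obtain ⟨y₁, y₂, y₃, y₄, hy, hty⟩ := Zloc_two_inter_Zloc_subset_coordSums hp hmod
      ⟨hzu, sub_mem_Zloc hz2 (hu hu_mem)⟩
    obtain ⟨x₁, x₂, x₃, x₄, hx, rfl⟩ := hu_mem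
    refine ⟨x₁, x₂, x₃, x₄, 1, 0, 0, 0, y₁, y₂, y₃, y₄, 1, 0, 0, 0, by linarith, ?_⟩
    rw [hx, hy]
    norm_num [fab]
  · rintro _ ⟨x₁, x₂, x₃, x₄, x₁', x₂', x₃', x₄', y₁, y₂, y₃, y₄, y₁', y₂', y₃', y₄', rfl, h⟩
    have hx : fab (-1) (-p) x₁ x₂ x₃ x₄ = 0 := by nlinarith
    have hy : fab (2 * p) p y₁ y₂ y₃ y₄ = 0 := by nlinarith
    rw [two_mul_mem_Zloc_iff (by omega), add_assoc _ y₁]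
    exact add_mem_Zloc (hu ⟨_, _, _, _, hx, rfl⟩) (ht ⟨_, _, _, _, hy, rfl⟩)
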